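/- arXiv:1402.2852 — 4 statements merged into one kernel-verified Lean document; each statement's English description precedes it below -/
import Mathlib

section
/- For every integer m×n matrix A, the Graver basis of A, i.e. the set of ⊑-minimal elements of {x ∈ ℤ^n : Ax = 0, x ≠ 0}, is a finite set. -/
/-- The conformal order on `ℤ^n`: `x ⊑ y` iff for every coordinate `i`,
`x i * y i ≥ 0` and `|x i| ≤ |y i|`. -/
def Conf {n : ℕ} (x y : Fin n → ℤ) : Prop :=
  ∀ i, 0 ≤ x i * y i ∧ |x i| ≤ |y i|

/-- The Graver basis of an integer `m × n` matrix `A`: the set of `⊑`-minimal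
elements of `{x ∈ ℤ^n : Ax = 0, x ≠ 0}`. -/
def GraverBasis {m n : ℕ} (A : Matrix (Fin m) (Fin n) ℤ) : Set (Fin n → ℤ) :=
  {x | (A.mulVec x = 0 ∧ x ≠ 0) ∧
    ∀ y, (A.mulVec y = 0 ∧ y ≠ 0) → Conf y x → y = x}

/-! Since `x ⊑ y` holds iff `x⁺ ≤ y⁺` and `x⁻ ≤ y⁻`, the map `x ↦ (x⁺, x⁻)` embeds the conformal
order into a product of orders on nonnegative integer vectors, so it is a well-quasi-order by
Dickson's lemma. The minimal elements of any set form an antichain, and antichains of a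
well-quasi-order are finite. -/

theorem mul_nonneg_and_abs_le_abs_iff_posPart_le_and_negPart_le {α : Type*} [Ring α]
    [LinearOrder α] [IsStrictOrderedRing α] {a b : α} :
    0 ≤ a * b ∧ |a| ≤ |b| ↔ a⁺ ≤ b⁺ ∧ a⁻ ≤ b⁻ := by
  have same_sign {a b : α} (ha : 0 ≤ a) (hb : 0 ≤ b) :
      0 ≤ a * b ∧ |a| ≤ |b| ↔ a⁺ ≤ b⁺ ∧ a⁻ ≤ b⁻ := by
    simp [posPart_of_nonneg, negPart_of_nonneg, abs_of_nonneg, mul_nonneg, ha, hb]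
  have opposite_sign {a b : α} (ha : 0 ≤ a) (hb : b ≤ 0) :
      0 ≤ a * b ∧ |a| ≤ |b| ↔ a⁺ ≤ b⁺ ∧ a⁻ ≤ b⁻ := by
    have left_iff : 0 ≤ a * b ∧ |a| ≤ |b| ↔ a = 0 := by
      refine ⟨fun ⟨hab, habs⟩ ↦ ?_, fun h ↦ by simp [h]⟩
      obtain h | h := mul_eq_zero.1 ((mul_nonpos_of_nonneg_of_nonpos ha hb).antisymm hab)
      · exact h
      · rwa [h, abs_zero, abs_nonpos_iff] at habs
    have right_iff : a⁺ ≤ b⁺ ∧ a⁻ ≤ b⁻ ↔ a = 0 := by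
      simp [posPart_of_nonneg ha, posPart_of_nonpos hb, negPart_of_nonneg ha, ha.ge_iff_eq']
    exact left_iff.trans right_iff.symm
  obtain ha | ha := le_total 0 a <;> obtain hb | hb := le_total 0 b
  · exact same_sign ha hb
  · exact opposite_sign ha hb
  · simpa [and_comm] using opposite_sign (neg_nonneg.2 ha) (neg_nonpos.2 hb)
  · simpa [and_comm] using same_sign (neg_nonneg.2 ha) (neg_nonneg.2 hb)

theorem conf_iff_posPart_le_and_negPart_le {n : ℕ} {x y : Fin n → ℤ} :
    Conf x y ↔ x⁺ ≤ y⁺ ∧ x⁻ ≤ y⁻ := by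
  simp only [Conf, mul_nonneg_and_abs_le_abs_iff_posPart_le_and_negPart_le, forall_and, Pi.le_def,
    Pi.posPart_apply, Pi.negPart_apply]

theorem isPWO_Ici_pi {ι : Type*} {α : ι → Type*} [Finite ι] [∀ i, LinearOrder (α i)]
    [∀ i, LocallyFiniteOrder (α i)] (a : ∀ i, α i) : (Set.Ici a).IsPWO := by
  rw [← Set.pi_univ_Ici]
  exact Set.IsPWO.pi fun i ↦ bddBelow_Ici.isWF.isPWO

theorem wellQuasiOrdered_conf (n : ℕ) : WellQuasiOrdered (Conf (n := n)) := by
  intro u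
  have dickson : (Set.Ici (0 : Fin n → ℤ) ×ˢ Set.Ici (0 : Fin n → ℤ)).IsPWO :=
    (isPWO_Ici_pi 0).prod (isPWO_Ici_pi 0)
  obtain ⟨k, l, hkl, hle⟩ := dickson.exists_lt (f := fun k ↦ ((u k)⁺, (u k)⁻))
    fun k ↦ ⟨posPart_nonneg (u k), negPart_nonneg (u k)⟩
  exact ⟨k, l, hkl, conf_iff_posPart_le_and_negPart_le.2 hle⟩

theorem isAntichain_setOf_rel_minimal {α : Type*} (r : α → α → Prop) (s : Set α) :
    IsAntichain r {x ∈ s | ∀ y ∈ s, r y x → y = x} :=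
  fun _ hx _ hy hne hxy ↦ hne (hy.2 _ hx.1 hxy)

theorem graverBasis_finite_general {n : ℕ} (s : Set (Fin n → ℤ)) :
    {x ∈ s | ∀ y ∈ s, Conf y x → y = x}.Finite :=
  (isAntichain_setOf_rel_minimal Conf s).finite_of_wellQuasiOrdered (wellQuasiOrdered_conf n)

/-- The Graver basis of any integer matrix is a finite set. -/
theorem graverBasis_finite {m n : ℕ} (A : Matrix (Fin m) (Fin n) ℤ) :
    (GraverBasis A).Finite :=
  graverBasis_finite_general {x | A.mulVec x = 0 ∧ x ≠ 0}
end

section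
/- Let a ∈ ℤ^n with a ≥ 0, let a_0 := Σ_{i=1}^n a_i, and define c¹, c² ∈ ℤ^{n+1} (coordinates indexed 0,…,n) by c¹ = (0, a_1, …, a_n) and c² = (a_0, −a_1, …, −a_n). Let X := {x ∈ ℤ^{n+1} : x_0 = 1 and x_i ∈ {0,1} for i = 1,…,n}. Then there exists x ∈ X with 2·max(c¹·x, c²·x) = a_0 if and only if there exists a subset I ⊆ {1,…,n} with Σ_{i∈I} a_i = Σ_{i∉I} a_i. -/
/-!
A 0/1 vector with leading coordinate 1 picks out a subset `I`, and its two costs are the sums of `a`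
over `I` and over its complement. These add up to `a₀`, and the larger of two summands is half of
their total exactly when they are equal.
-/

theorem max_add_max_eq_add_iff {M : Type*} [AddCommSemigroup M] [IsLeftCancelAdd M]
    [LinearOrder M] {b c : M} : max b c + max b c = b + c ↔ b = c := by
  rw [← max_add_min b c, add_right_inj]
  exact sup_eq_inf

section ZeroOneVectors

variable {ι R : Type*} [NonAssocSemiring R]

theorem sum_mul_eq_sum_filter_of_zero_or_one [DecidableEq R] (s : Finset ι) (a : ι → R)
    {x : ι → R} (hx : ∀ i ∈ s, x i = 0 ∨ x i = 1) :
    ∑ i ∈ s, a i * x i = ∑ i ∈ s with x i = 1, a i := by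
  rw [Finset.sum_filter]
  refine Finset.sum_congr rfl fun i hi => ?_
  split_ifs with h_one
  · rw [h_one, mul_one]
  · rw [(hx i hi).resolve_right h_one, mul_zero]

theorem exists_zero_or_one_sum_mul_iff [Fintype ι] (a : ι → R) (p : R → Prop) :
    (∃ x : ι → R, (∀ i, x i = 0 ∨ x i = 1) ∧ p (∑ i, a i * x i)) ↔
      ∃ I : Finset ι, p (∑ i ∈ I, a i) := by
  classical
  constructor
  · rintro ⟨x, hx, hp⟩
    rw [sum_mul_eq_sum_filter_of_zero_or_one _ _ fun i _ => hx i] at hp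
    exact ⟨_, hp⟩
  · rintro ⟨I, hp⟩
    refine ⟨fun i => if i ∈ I then 1 else 0, fun i => (ite_eq_or_eq _ _ _).symm, ?_⟩
    simpa using hp

end ZeroOneVectors

theorem two_mul_max_sum_sub_eq_sum_iff {ι R : Type*} [Fintype ι] [DecidableEq ι] [NonAssocRing R]
    [LinearOrder R] (a : ι → R) (I : Finset ι) :
    2 * max (∑ i ∈ I, a i) (∑ i, a i - ∑ i ∈ I, a i) = ∑ i, a i ↔
      ∑ i ∈ I, a i = ∑ i ∈ Iᶜ, a i := by
  rw [← Finset.sum_add_sum_compl I a, add_sub_cancel_left, two_mul, max_add_max_eq_add_iff]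

theorem subset_sum_reduction_minmax_general {R : Type*} [NonAssocRing R] [LinearOrder R] {n : ℕ}
    (a : Fin n → R) :
    (∃ x : Fin (n + 1) → R, x 0 = 1 ∧
        (∀ i : Fin n, x i.succ = 0 ∨ x i.succ = 1) ∧
        2 * max (∑ i, (Fin.cons 0 a : Fin (n + 1) → R) i * x i)
            (∑ i, (Fin.cons (∑ j, a j) (fun j => -a j) : Fin (n + 1) → R) i * x i) =
          (∑ j, a j)) ↔
      ∃ I : Finset (Fin n), ∑ i ∈ I, a i = ∑ i ∈ Iᶜ, a i := by
  simp only [Fin.exists_fin_succ_pi, Fin.cons_zero, Fin.cons_succ, exists_and_left, exists_eq_left,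
    Fin.sum_univ_succ, mul_one, zero_mul, zero_add, neg_mul, Finset.sum_neg_distrib,
    ← sub_eq_add_neg]
  rw [exists_zero_or_one_sum_mul_iff a fun s => 2 * max s (∑ j, a j - s) = ∑ j, a j]
  exact exists_congr (two_mul_max_sum_sub_eq_sum_iff a)

/-- Subset-sum reduction for `min_X max_C` with a list `C`: there is a feasible
`x` whose worst-case cost doubled equals `a₀` iff the subset-sum instance `a`
admits a balanced partition. -/
theorem subset_sum_reduction_minmax (n : ℕ) (a : Fin n → ℤ) (ha : ∀ i, 0 ≤ a i) :
    (∃ x : Fin (n + 1) → ℤ, x 0 = 1 ∧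
        (∀ i : Fin n, x i.succ = 0 ∨ x i.succ = 1) ∧
        2 * max (∑ i, (Fin.cons 0 a : Fin (n + 1) → ℤ) i * x i)
            (∑ i, (Fin.cons (∑ j, a j) (fun j => -a j) : Fin (n + 1) → ℤ) i * x i) =
          (∑ j, a j)) ↔
      ∃ I : Finset (Fin n), ∑ i ∈ I, a i = ∑ i ∈ Iᶜ, a i :=
  subset_sum_reduction_minmax_general a
end

section
/- Let a ∈ ℤ^n with a ≥ 0, let a_0 := Σ_{i=1}^n a_i, let A be the (n+1)×(n+2) integer matrix whose first n+1 columns form the identity I_{n+1} and whose last column is (a_0, −2a_1, …, −2a_n)ᵀ, and let b := (0, −a_1, …, −a_n) ∈ ℤ^{n+1}. Then the set X := {x ∈ ℤ^{n+2} : Ax = b, −a_0 ≤ x_i ≤ a_0 for i = 0,…,n, 0 ≤ x_{n+1} ≤ 1} equals the two-element set {(0, −a_1, …, −a_n, 0), (−a_0, a_1, …, a_n, 1)}. -/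
/-- The `(n+1) × (n+2)` matrix `A = (I_{n+1} | (a₀, -2a)ᵀ)`. -/
def gadgetMatrix (n : ℕ) (a : Fin n → ℤ) : Matrix (Fin (n + 1)) (Fin (n + 2)) ℤ :=
  Matrix.of fun i =>
    Fin.snoc (fun j : Fin (n + 1) => if i = j then 1 else 0)
      ((Fin.cons (∑ k, a k) (fun k => -2 * a k) : Fin (n + 1) → ℤ) i)

/-! The equation `(I | c) (p, t) = b` says `p = b - t c`, so the integer `t ∈ [0, 1]` selects one of
the two points `(b, 0)` and `(b - c, 1)`. For `b = (0, -a)` and `c = (a₀, -2a)` both `b` and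
`b - c = (-a₀, a)` lie in the box, because `0 ≤ aᵢ ≤ a₀`. -/

/-- The block matrix `(I | c)`, the coefficient matrix of a gadget with arbitrary last column `c`.
The columns are indexed by `Fin (m + 1)` rather than `Fin m ⊕ Unit`, so that `gadgetMatrix` is
definitionally an instance. -/
def identitySnoc {R : Type*} [Zero R] [One R] {m : ℕ} (c : Fin m → R) :
    Matrix (Fin m) (Fin (m + 1)) R :=
  Matrix.of fun i => Fin.snoc (fun j => if i = j then 1 else 0) (c i)

theorem identitySnoc_mulVec_snoc {R : Type*} [CommSemiring R] {m : ℕ} (c p : Fin m → R) (t : R) :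
    (identitySnoc c).mulVec (Fin.snoc p t) = p + t • c := by
  ext i
  simp [identitySnoc, Matrix.mulVec, dotProduct, Fin.sum_univ_castSucc, mul_comm]

theorem gadget_feasible_set_general {m : ℕ} {b c : Fin m → ℤ} {S : Set (Fin m → ℤ)}
    (hb : b ∈ S) (hbc : b - c ∈ S) :
    {x : Fin (m + 1) → ℤ | (identitySnoc c).mulVec x = b ∧ Fin.init x ∈ S ∧
        0 ≤ x (Fin.last m) ∧ x (Fin.last m) ≤ 1} =
      {Fin.snoc b 0, Fin.snoc (b - c) 1} := by
  ext x
  induction x using Fin.snocCases with | snoc p t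
  simp only [Set.mem_ofPred_eq, Set.mem_insert_iff, Set.mem_singleton_iff,
    identitySnoc_mulVec_snoc, Fin.init_snoc, Fin.snoc_last, Fin.snoc_inj]
  constructor
  · rintro ⟨hp, -, ht₀, ht₁⟩
    obtain rfl | rfl : t = 0 ∨ t = 1 := by lia
    · exact .inl ⟨by simpa using hp, rfl⟩
    · exact .inr ⟨eq_sub_of_add_eq (by simpa using hp), rfl⟩
  · rintro (⟨rfl, rfl⟩ | ⟨rfl, rfl⟩)
    · simp [hb]
    · simp [hbc]

theorem neg_le_cons_and_cons_le {α : Type*} [AddCommGroup α] [LinearOrder α]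
    [IsOrderedAddMonoid α] {n : ℕ} {y s : α} {v : Fin n → α}
    (hy : |y| ≤ s) (hv : ∀ k, |v k| ≤ s) (i : Fin (n + 1)) :
    -s ≤ (Fin.cons y v : Fin (n + 1) → α) i ∧ (Fin.cons y v : Fin (n + 1) → α) i ≤ s :=
  abs_le.1 (Fin.cases hy hv i)

theorem cons_zero_neg_sub_cons_neg_two_mul {R : Type*} [Ring R] {n : ℕ} (s : R) (a : Fin n → R) :
    (Fin.cons 0 (fun k => -a k) : Fin (n + 1) → R) - Fin.cons s (fun k => -2 * a k) =
      Fin.cons (-s) a := by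
  ext i
  cases i using Fin.cases with
  | zero => simp
  | succ k => simp [two_mul]

/-- For `a ≥ 0`, `a₀ = ∑ aᵢ`, `b = (0, -a)`, the feasible set
`X = {x ∈ ℤ^{n+2} : Ax = b, -a₀ ≤ xᵢ ≤ a₀ (i = 0,…,n), 0 ≤ x_{n+1} ≤ 1}`
equals `{(0, -a, 0), (-a₀, a, 1)}`. -/
theorem gadget_feasible_set (n : ℕ) (a : Fin n → ℤ) (ha : ∀ i, 0 ≤ a i) :
    {x : Fin (n + 2) → ℤ |
        (gadgetMatrix n a).mulVec x = Fin.cons 0 (fun i => -a i) ∧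
        (∀ i : Fin (n + 1), -(∑ k, a k) ≤ x i.castSucc ∧ x i.castSucc ≤ ∑ k, a k) ∧
        0 ≤ x (Fin.last (n + 1)) ∧ x (Fin.last (n + 1)) ≤ 1} =
      {Fin.snoc (Fin.cons 0 (fun i => -a i)) 0,
        Fin.snoc (Fin.cons (-(∑ k, a k)) a) 1} := by
  have hsum : 0 ≤ ∑ k, a k := Fintype.sum_nonneg ha
  have habs (k : Fin n) : |a k| ≤ ∑ k, a k :=
    (abs_of_nonneg (ha k)).trans_le <|
      Finset.single_le_sum (fun i _ => ha i) (Finset.mem_univ k)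
  rw [← cons_zero_neg_sub_cons_neg_two_mul]
  refine gadget_feasible_set_general
    (S := {p | ∀ i, -(∑ k, a k) ≤ p i ∧ p i ≤ ∑ k, a k}) ?_ ?_
  · exact neg_le_cons_and_cons_le (abs_zero.trans_le hsum) (by simpa only [abs_neg] using habs)
  · rw [cons_zero_neg_sub_cons_neg_two_mul]
    exact neg_le_cons_and_cons_le (by rw [abs_neg, abs_of_nonneg hsum]) habs
end

section
/- Let a ∈ ℤ^n with a ≥ 0, let a_0 := Σ_{i=1}^n a_i, let X := {(0, −a_1, …, −a_n, 0), (−a_0, a_1, …, a_n, 1)} ⊂ ℤ^{n+2}, and let C := {c ∈ ℤ^{n+2} : c_0 = 1, c_i ∈ {0,1} for i = 1,…,n, c_{n+1} = 0}. Then there exists c ∈ C with 2·min_{x∈X} c·x = −a_0 if and only if there exists a subset I ⊆ {1,…,n} with Σ_{i∈I} a_i = Σ_{i∉I} a_i. -/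
/-!
Put `s = ∑_{i ∈ I} aᵢ` and `t = ∑_{i ∉ I} aᵢ`, where `I` is the set of middle coordinates at which
the 0/1 vector `c` equals `1`. Since `a₀ = s + t`, the two elements of `X` have costs `-s` and
`-a₀ + s = -t`. Their minimum is one of the two costs, so its double equals their sum
`-a₀ = -s - t` exactly when `s = t`.
-/

theorem two_mul_min_eq_add_iff {R : Type*} [NonAssocRing R] [LinearOrder R] (x y : R) :
    2 * min x y = x + y ↔ x = y := by
  rw [two_mul]
  rcases min_choice x y with h | h <;> rw [h]
  · exact add_right_inj x
  · rw [add_left_inj, eq_comm]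

theorem forall_eq_zero_or_one_iff_exists_finset {ι R : Type*} [Finite ι] [DecidableEq ι]
    [Zero R] [One R] (w : ι → R) :
    (∀ i, w i = 0 ∨ w i = 1) ↔ ∃ I : Finset ι, ∀ i, w i = if i ∈ I then 1 else 0 := by
  constructor
  · intro hw
    refine ⟨(Set.toFinite {i | w i = 1}).toFinset, fun i => ?_⟩
    by_cases hi : w i = 1
    · simp [hi]
    · simpa [hi] using (hw i).resolve_right hi
  · rintro ⟨I, hI⟩ i
    rw [hI]
    exact (ite_eq_or_eq _ _ _).symm

theorem sum_mul_snoc_cons {R : Type*} [NonUnitalNonAssocSemiring R] {n : ℕ}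
    (c : Fin (n + 2) → R) (u v : R) (f : Fin n → R) :
    ∑ i, c i * (Fin.snoc (Fin.cons u f) v : Fin (n + 2) → R) i =
      c 0 * u + ∑ i : Fin n, c i.succ.castSucc * f i + c (Fin.last (n + 1)) * v := by
  rw [Fin.sum_univ_castSucc, Fin.sum_univ_succ]
  simp only [Fin.snoc_castSucc, Fin.snoc_last, Fin.cons_zero, Fin.cons_succ]
  rw [Fin.castSucc_zero]

theorem two_mul_min_cost_eq_neg_sum_iff {R : Type*} [NonAssocRing R] [LinearOrder R] {n : ℕ}
    (a : Fin n → R) {c : Fin (n + 2) → R} {I : Finset (Fin n)} (hfirst : c 0 = 1)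
    (hmid : ∀ i : Fin n, c i.succ.castSucc = if i ∈ I then 1 else 0)
    (hlast : c (Fin.last (n + 1)) = 0) :
    2 * min (∑ i, c i * (Fin.snoc (Fin.cons 0 (fun j => -a j)) 0 : Fin (n + 2) → R) i)
        (∑ i, c i * (Fin.snoc (Fin.cons (-(∑ j, a j)) a) 1 : Fin (n + 2) → R) i) =
      -(∑ j, a j) ↔ ∑ i ∈ I, a i = ∑ i ∈ Iᶜ, a i := by
  have hsplit : ∑ i, a i = ∑ i ∈ I, a i + ∑ i ∈ Iᶜ, a i := (Finset.sum_add_sum_compl I a).symm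
  have hmid_sum : ∑ i : Fin n, c i.succ.castSucc * a i = ∑ i ∈ I, a i := by
    simp only [hmid, ite_mul, one_mul, zero_mul, Finset.sum_ite_mem, Finset.univ_inter]
  have hcost_zero : ∑ i, c i * (Fin.snoc (Fin.cons 0 (fun j => -a j)) 0 : Fin (n + 2) → R) i =
      -∑ i ∈ I, a i := by
    simp only [sum_mul_snoc_cons, mul_neg, Finset.sum_neg_distrib, hmid_sum, mul_zero, zero_add,
      add_zero]
  have hcost_one : ∑ i, c i * (Fin.snoc (Fin.cons (-(∑ j, a j)) a) 1 : Fin (n + 2) → R) i =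
      -∑ i ∈ Iᶜ, a i := by
    rw [sum_mul_snoc_cons, hfirst, hmid_sum, hlast, hsplit, one_mul, zero_mul]
    abel
  rw [hcost_zero, hcost_one, hsplit, neg_add, two_mul_min_eq_add_iff, neg_inj]

theorem subset_sum_reduction_maxmin_general {R : Type*} [NonAssocRing R] [LinearOrder R] (n : ℕ)
    (a : Fin n → R) :
    (∃ c : Fin (n + 2) → R, c 0 = 1 ∧
        (∀ i : Fin n, c i.succ.castSucc = 0 ∨ c i.succ.castSucc = 1) ∧
        c (Fin.last (n + 1)) = 0 ∧
        2 * min (∑ i, c i * (Fin.snoc (Fin.cons 0 (fun j => -a j)) 0 : Fin (n + 2) → R) i)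
            (∑ i, c i * (Fin.snoc (Fin.cons (-(∑ j, a j)) a) 1 : Fin (n + 2) → R) i) =
          -(∑ j, a j)) ↔
      ∃ I : Finset (Fin n), ∑ i ∈ I, a i = ∑ i ∈ Iᶜ, a i := by
  constructor
  · rintro ⟨c, hfirst, hbinary, hlast, hvalue⟩
    obtain ⟨I, hmid⟩ := (forall_eq_zero_or_one_iff_exists_finset _).mp hbinary
    exact ⟨I, (two_mul_min_cost_eq_neg_sum_iff a hfirst hmid hlast).mp hvalue⟩
  · rintro ⟨I, hbalanced⟩
    let c : Fin (n + 2) → R := Fin.snoc (Fin.cons 1 fun i => if i ∈ I then 1 else 0) 0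
    have hfirst : c 0 = 1 := Fin.snoc_castSucc (α := fun _ => R) _ _ 0
    have hmid (i : Fin n) : c i.succ.castSucc = if i ∈ I then 1 else 0 :=
      Fin.snoc_castSucc (α := fun _ => R) _ _ i.succ
    have hlast : c (Fin.last (n + 1)) = 0 := Fin.snoc_last (α := fun _ => R) _ _
    exact ⟨c, hfirst, (forall_eq_zero_or_one_iff_exists_finset _).mpr ⟨I, hmid⟩, hlast,
      (two_mul_min_cost_eq_neg_sum_iff a hfirst hmid hlast).mpr hbalanced⟩

/-- Subset-sum reduction for `max_C min_X` with a box `C`: there is a cost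
vector `c ∈ C` whose best-response value doubled equals `-a₀` iff the
subset-sum instance `a` admits a balanced partition. -/
theorem subset_sum_reduction_maxmin (n : ℕ) (a : Fin n → ℤ) (ha : ∀ i, 0 ≤ a i) :
    (∃ c : Fin (n + 2) → ℤ, c 0 = 1 ∧
        (∀ i : Fin n, c i.succ.castSucc = 0 ∨ c i.succ.castSucc = 1) ∧
        c (Fin.last (n + 1)) = 0 ∧
        2 * min (∑ i, c i * (Fin.snoc (Fin.cons 0 (fun j => -a j)) 0 : Fin (n + 2) → ℤ) i)
            (∑ i, c i * (Fin.snoc (Fin.cons (-(∑ j, a j)) a) 1 : Fin (n + 2) → ℤ) i) =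
          -(∑ j, a j)) ↔
      ∃ I : Finset (Fin n), ∑ i ∈ I, a i = ∑ i ∈ Iᶜ, a i :=
  subset_sum_reduction_maxmin_general n a
end
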